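/- arXiv:2109.04522 — 2 statements merged into one kernel-verified Lean document; each statement's English description precedes it below -/
import Mathlib

section
/- Consider the PIAG setting and additionally assume the quadratic functional growth condition with constant μ > 0; let Q = L/μ. Let {x_k} be the PIAG iterates with maximum delay τ and step-size γ = h/(L·(2τ+1)) for some h ∈ (0,1]. Then for every k ≥ 0: (i) ‖x_k − Π_{X⋆}(x_k)‖² ≤ (1 − 1/(1 + (Q+1)(2τ+1)/h))^k · ( (2/L)·(P(x_0) − P⋆) + ‖x_0 − Π_{X⋆}(x_0)‖² ), and (ii) P(x_k) − P⋆ ≤ (1 − 1/(1 + (Q+1)(2τ+1)/h))^k · ( P(x_0) − P⋆ + (L/2)·‖x_0 − Π_{X⋆}(x_0)‖² ). -/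
/-!
The Lyapunov function is `V = P - P⋆ + (L/2) dist²(·, X⋆)`. Comparing the proximal step with the
projection of the current iterate bounds the distance at the next iterate and gains `γ` times the
next gap `P - P⋆`; comparing it with the current iterate bounds the gap itself. In both, the delays
cost only a multiple of the sum of the last `τ` squared steps. By quadratic growth, the gained
`Lγ (P - P⋆)` dominates `Lγ / (1 + L/μ) * V`, so that `q = 1 + Lγ / (1 + L/μ)` satisfies
`q V (k + 1) ≤ V k` up to a negative multiple of the current squared step and a positive multiple
of the last `τ` ones. Weighting by `q ^ k` and summing, the negative terms absorb the delayed ones,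
because Bernoulli's inequality gives `q ^ τ (τ + 1) ≤ 2τ + 1` when `Lγ (2τ + 1) ≤ 1`.
-/

open Filter Topology
open Finset (range Ico)
open scoped NNReal Gradient RealInnerProductSpace

section DelayedRecursion

lemma sum_range_sum_Ico_sub_le {y : ℕ → ℝ} (hy : ∀ j, 0 ≤ y j) (τ K : ℕ) :
    ∑ k ∈ range K, ∑ j ∈ Ico (k - τ) k, y j ≤ τ * ∑ j ∈ range K, y j := by
  have swap : ∑ k ∈ range K, ∑ j ∈ Ico (k - τ) k, y j
      = ∑ j ∈ range K, ∑ _k ∈ Ico (j + 1) (min (j + τ + 1) K), y j := by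
    refine Finset.sum_comm' fun k j ↦ ?_
    simp only [Finset.mem_range, Finset.mem_Ico]
    omega
  rw [swap, Finset.mul_sum]
  refine Finset.sum_le_sum fun j _ ↦ ?_
  rw [Finset.sum_const, nsmul_eq_mul, Nat.card_Ico]
  gcongr
  · exact hy j
  · omega

variable {V w : ℕ → ℝ} {q A B : ℝ} {τ : ℕ}

lemma pow_mul_sum_Ico_sub_le (hw : ∀ j, 0 ≤ w j) (hq : 1 ≤ q) (k : ℕ) :
    q ^ k * ∑ j ∈ Ico (k - τ) k, w j ≤ q ^ τ * ∑ j ∈ Ico (k - τ) k, q ^ j * w j := by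
  rw [Finset.mul_sum, Finset.mul_sum]
  refine Finset.sum_le_sum fun j hj ↦ ?_
  rw [← mul_assoc, ← pow_add]
  have hkj : k ≤ τ + j := by
    rw [Finset.mem_Ico] at hj
    omega
  gcongr
  exact hw j

lemma pow_mul_le_of_delayed_recursion (hw : ∀ j, 0 ≤ w j) (hq : 1 ≤ q) (hB : 0 ≤ B)
    (hBA : B * q ^ τ * τ ≤ A)
    (hV : ∀ k, q * V (k + 1) ≤ V k - A * w k + B * ∑ j ∈ Ico (k - τ) k, w j) (K : ℕ) :
    q ^ K * V K ≤ V 0 := by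
  have hq0 : 0 ≤ q := zero_le_one.trans hq
  have hqw (j : ℕ) : 0 ≤ q ^ j * w j := mul_nonneg (pow_nonneg hq0 j) (hw j)
  have telescoped : q ^ K * V K ≤ V 0 - A * ∑ j ∈ range K, q ^ j * w j
      + B * q ^ τ * ∑ k ∈ range K, ∑ j ∈ Ico (k - τ) k, q ^ j * w j := by
    induction K with
    | zero => simp
    | succ k ih =>
      have hVk := mul_le_mul_of_nonneg_left (hV k) (pow_nonneg hq0 k)
      have hwk := mul_le_mul_of_nonneg_left (pow_mul_sum_Ico_sub_le (τ := τ) hw hq k) hB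
      rw [Finset.sum_range_succ, Finset.sum_range_succ, pow_succ]
      linarith
  have delayed := mul_le_mul_of_nonneg_left (sum_range_sum_Ico_sub_le hqw τ K)
    (mul_nonneg hB (pow_nonneg hq0 τ))
  have absorbed := mul_le_mul_of_nonneg_right hBA
    (Finset.sum_nonneg fun j (_ : j ∈ range K) ↦ hqw j)
  linarith

end DelayedRecursion

section StepSizeConstants

variable {τ : ℕ} {θ : ℝ}

lemma one_add_pow_mul_succ_le (hθ : 0 ≤ θ) (hθτ : θ * (2 * τ + 1) ≤ 1) :
    (1 + θ) ^ τ * (τ + 1) ≤ 2 * τ + 1 := by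
  have hτ : (0 : ℝ) ≤ τ := τ.cast_nonneg
  have hθ1 : θ ≤ 1 := by nlinarith [hτ]
  have bernoulli : 1 - τ * θ ≤ (1 - θ) ^ τ := by
    simpa [sub_eq_add_neg] using one_add_mul_le_pow (a := -θ) (by linarith) τ
  have hprod : (1 + θ) ^ τ * (1 - τ * θ) ≤ 1 := calc
    (1 + θ) ^ τ * (1 - τ * θ) ≤ (1 + θ) ^ τ * (1 - θ) ^ τ := by gcongr
    _ = (1 - θ ^ 2) ^ τ := by rw [← mul_pow]; ring
    _ ≤ 1 := pow_le_one₀ (by nlinarith) (by nlinarith)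
  calc (1 + θ) ^ τ * (τ + 1) ≤ (1 + θ) ^ τ * ((2 * τ + 1) * (1 - τ * θ)) := by
        gcongr
        nlinarith
    _ = (2 * τ + 1) * ((1 + θ) ^ τ * (1 - τ * θ)) := by ring
    _ ≤ 2 * τ + 1 := mul_le_of_le_one_right (by positivity) hprod

lemma delay_coefficient_mul_pow_le {q : ℝ} (hθ : 0 < θ) (hθτ : θ * (2 * τ + 1) ≤ 1)
    (hq0 : 0 ≤ q) (hq : q ≤ 1 + θ) :
    (1 + θ * (τ + 1)) * q ^ τ * τ ≤ 2 / θ - τ - θ * (τ + 1) := by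
  have hτ : (0 : ℝ) ≤ τ := τ.cast_nonneg
  have hpow : q ^ τ * (τ + 1) ≤ 2 * τ + 1 := by
    refine le_trans ?_ (one_add_pow_mul_succ_le hθ.le hθτ)
    gcongr
  have hpow_two : q ^ τ ≤ 2 := by nlinarith [hτ]
  have hθpow : θ * (τ + 1) * q ^ τ ≤ 1 := by nlinarith
  have hinv : 2 * (2 * τ + 1) ≤ 2 / θ := by
    rw [le_div_iff₀ hθ]
    linarith
  nlinarith

end StepSizeConstants

section Smooth

variable {E : Type*} [NormedAddCommGroup E] [InnerProductSpace ℝ E] [CompleteSpace E]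
  {f : E → ℝ} {f' a u : E} {s : Set E} {l : ℝ≥0}

lemma hasDerivAt_add_smul_of_hasGradientAt {v : E} {t : ℝ}
    (hf : HasGradientAt f f' (a + t • v)) :
    HasDerivAt (fun t : ℝ ↦ f (a + t • v)) ⟪f', v⟫ t := by
  have hline : HasDerivAt (fun t : ℝ ↦ a + t • v) v t := by
    simpa using ((hasDerivAt_id t).smul_const v).const_add a
  exact (hf.hasFDerivAt.comp_hasDerivAt t hline).congr_deriv
    InnerProductSpace.toDual_apply_apply

lemma add_inner_le_of_convexOn (hf : ConvexOn ℝ s f) (hf' : HasGradientAt f f' a)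
    (ha : a ∈ s) (hu : u ∈ s) : f a + ⟪f', u - a⟫ ≤ f u := by
  have hline : ConvexOn ℝ ((AffineMap.lineMap a u : ℝ →ᵃ[ℝ] E) ⁻¹' s)
      fun t : ℝ ↦ f (a + t • (u - a)) := by
    simpa only [Function.comp_def, AffineMap.lineMap_apply, vsub_eq_sub, vadd_eq_add, add_comm]
      using hf.comp_affineMap (AffineMap.lineMap a u : ℝ →ᵃ[ℝ] E)
  have hslope := hline.le_slope_of_hasDerivAt (x := 0) (y := 1) (by simpa) (by simpa) one_pos
    (hasDerivAt_add_smul_of_hasGradientAt (by simpa))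
  simp only [slope_def_field, zero_smul, one_smul, add_zero, add_sub_cancel, sub_zero,
    div_one] at hslope
  linarith

lemma le_add_inner_add_sq_of_lipschitzWith_gradient (hf : Differentiable ℝ f)
    (hl : LipschitzWith l (∇ f)) (a u : E) :
    f u ≤ f a + ⟪∇ f a, u - a⟫ + l / 2 * ‖u - a‖ ^ 2 := by
  set v := u - a with hv
  have hderiv (t : ℝ) : HasDerivAt
      (fun t : ℝ ↦ f (a + t • v) - t * ⟪∇ f a, v⟫ - l / 2 * ‖v‖ ^ 2 * t ^ 2)
      (⟪∇ f (a + t • v), v⟫ - ⟪∇ f a, v⟫ - l * ‖v‖ ^ 2 * t) t := by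
    refine (((hasDerivAt_add_smul_of_hasGradientAt (hf (a + t • v)).hasGradientAt).sub
      ((hasDerivAt_id t).mul_const ⟪∇ f a, v⟫)).sub
      (((hasDerivAt_id t).pow 2).const_mul (l / 2 * ‖v‖ ^ 2))).congr_deriv ?_
    simp only [id_eq]
    ring
  have hderiv_nonpos (t : ℝ) (ht : 0 ≤ t) :
      ⟪∇ f (a + t • v), v⟫ - ⟪∇ f a, v⟫ - l * ‖v‖ ^ 2 * t ≤ 0 := by
    have hgrad : ‖∇ f (a + t • v) - ∇ f a‖ ≤ l * (t * ‖v‖) := by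
      simpa [norm_smul, abs_of_nonneg ht] using hl.norm_sub_le (a + t • v) a
    rw [← inner_sub_left]
    nlinarith [real_inner_le_norm (∇ f (a + t • v) - ∇ f a) v, norm_nonneg v]
  have hanti := antitoneOn_of_deriv_nonpos (convex_Icc (0 : ℝ) 1)
    (fun t _ ↦ (hderiv t).continuousAt.continuousWithinAt)
    (fun t _ ↦ (hderiv t).differentiableAt.differentiableWithinAt)
    (fun t ht ↦ (hderiv t).deriv.trans_le
      (hderiv_nonpos t (by rw [interior_Icc] at ht; exact ht.1.le)))
  have hle := hanti (Set.left_mem_Icc.2 zero_le_one) (Set.right_mem_Icc.2 zero_le_one) zero_le_one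
  simp only [zero_smul, one_smul, add_zero, hv, add_sub_cancel] at hle
  linarith

lemma le_add_inner_gradient_of_convexOn (hf : Differentiable ℝ f) (hconv : ConvexOn ℝ Set.univ f)
    (hl : LipschitzWith l (∇ f)) (a u y : E) :
    f y ≤ f u + ⟪∇ f a, y - u⟫ + l / 2 * ‖y - a‖ ^ 2 := by
  have hsmooth := le_add_inner_add_sq_of_lipschitzWith_gradient hf hl a y
  have hconvex := add_inner_le_of_convexOn hconv (hf a).hasGradientAt
    (Set.mem_univ a) (Set.mem_univ u)
  have hsplit : ⟪∇ f a, y - u⟫ = ⟪∇ f a, y - a⟫ - ⟪∇ f a, u - a⟫ := by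
    rw [← inner_sub_right, sub_sub_sub_cancel_right]
  linarith

lemma le_add_inner_gradient_add_norm_mul_norm (hf : Differentiable ℝ f)
    (hl : LipschitzWith l (∇ f)) (a b y : E) :
    f y ≤ f b + ⟪∇ f a, y - b⟫ + l * (‖b - a‖ * ‖y - b‖) + l / 2 * ‖y - b‖ ^ 2 := by
  have hsmooth := le_add_inner_add_sq_of_lipschitzWith_gradient hf hl b y
  have hgrad : ⟪∇ f b, y - b⟫ - ⟪∇ f a, y - b⟫ ≤ l * (‖b - a‖ * ‖y - b‖) := by
    rw [← inner_sub_left, ← mul_assoc]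
    exact (real_inner_le_norm _ _).trans (by gcongr; exact hl.norm_sub_le b a)
  linarith

end Smooth

-- A bound `K i` can be negative only on a one-point space, where `K` is replaced by its average.
lemma exists_lipschitzWith_sum_eq {ι E G : Type*} [Fintype ι] [NormedAddCommGroup E]
    [SeminormedAddCommGroup G] {φ : ι → E → G} {K : ι → ℝ}
    (hφ : ∀ i a b, ‖φ i b - φ i a‖ ≤ K i * ‖b - a‖) (hK : 0 ≤ ∑ i, K i) :
    ∃ l : ι → ℝ≥0, (∀ i, LipschitzWith (l i) (φ i)) ∧ ∑ i, (l i : ℝ) = ∑ i, K i := by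
  rcases subsingleton_or_nontrivial E with _ | _
  · refine ⟨fun _ ↦ NNReal.mk ((∑ i, K i) / Fintype.card ι) (by positivity), fun i ↦ ?_, ?_⟩
    · exact fun a b ↦ by simp [Subsingleton.elim a b]
    · rcases isEmpty_or_nonempty ι with _ | _
      · simp
      · rw [Finset.sum_const, Finset.card_univ, nsmul_eq_mul, NNReal.coe_mk]
        exact mul_div_cancel₀ _ (Nat.cast_ne_zero.2 Fintype.card_ne_zero)
  · obtain ⟨a, b, hab⟩ := exists_pair_ne E
    have hK0 (i : ι) : 0 ≤ K i := nonneg_of_mul_nonneg_left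
      ((norm_nonneg _).trans (hφ i a b)) (norm_pos_iff.2 (sub_ne_zero.2 hab.symm))
    exact ⟨fun i ↦ NNReal.mk (K i) (hK0 i),
      fun i ↦ lipschitzWith_iff_norm_sub_le.2 fun b a ↦ hφ i a b, rfl⟩

/-- The squared length of the `k`-th step of the sequence `x`. -/
noncomputable def sqStep {E : Type*} [SeminormedAddCommGroup E] (x : ℕ → E) (k : ℕ) : ℝ :=
  ‖x (k + 1) - x k‖ ^ 2

section PathLength

variable {E : Type*} [SeminormedAddCommGroup E] {x : ℕ → E} {τ m k : ℕ}

lemma sqStep_nonneg (x : ℕ → E) (k : ℕ) : 0 ≤ sqStep x k := sq_nonneg _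

lemma sq_norm_sub_le_mul_sum_sqStep (hm : k - τ ≤ m) (hmk : m ≤ k) :
    ‖x k - x m‖ ^ 2 ≤ τ * ∑ j ∈ Ico (k - τ) k, sqStep x j := by
  have hpath : ‖x k - x m‖ ≤ ∑ j ∈ Ico m k, ‖x (j + 1) - x j‖ := by
    simpa [dist_eq_norm, norm_sub_rev] using dist_le_Ico_sum_dist x hmk
  calc ‖x k - x m‖ ^ 2 ≤ (∑ j ∈ Ico m k, ‖x (j + 1) - x j‖) ^ 2 := by gcongr
    _ ≤ (Ico m k).card * ∑ j ∈ Ico m k, sqStep x j := sq_sum_le_card_mul_sum_sq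
    _ ≤ τ * ∑ j ∈ Ico (k - τ) k, sqStep x j := by
      gcongr
      · exact Finset.sum_nonneg fun j _ ↦ sqStep_nonneg x j
      · rw [Nat.card_Ico]
        omega
      · exact fun j _ _ ↦ sqStep_nonneg x j

lemma norm_sub_mul_le_half_add_sum_sqStep (hm : k - τ ≤ m) (hmk : m ≤ k) (c : ℝ) :
    ‖x k - x m‖ * c ≤ (τ * c ^ 2 + ∑ j ∈ Ico (k - τ) k, sqStep x j) / 2 := by
  have hsum : 0 ≤ ∑ j ∈ Ico (k - τ) k, sqStep x j :=
    Finset.sum_nonneg fun j _ ↦ sqStep_nonneg x j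
  refine le_of_sq_le_sq ?_ (by positivity)
  have hsq := mul_le_mul_of_nonneg_right
    (sq_norm_sub_le_mul_sum_sqStep (x := x) hm hmk) (sq_nonneg c)
  nlinarith [sq_nonneg (τ * c ^ 2 - ∑ j ∈ Ico (k - τ) k, sqStep x j)]

end PathLength

section QuadraticGrowth

variable {E : Type*} [SeminormedAddCommGroup E]

/-- Quadratic growth of `Φ` on `s` away from its minimizers, with constant `μ`. The map `proj`
stands for the projection onto the minimizers: its values attain the minimum `Φmin`, and `proj z`
is the one among them nearest to `z`. -/
structure HasQuadraticGrowth (Φ : E → ℝ) (s : Set E) (Φmin : ℝ) (proj : E → E) (μ : ℝ) :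
    Prop where
  proj_mem : ∀ z, proj z ∈ s
  apply_proj : ∀ z, Φ (proj z) = Φmin
  norm_sub_proj_le : ∀ z w, ‖z - proj z‖ ≤ ‖z - proj w‖
  growth : ∀ z ∈ s, μ / 2 * ‖z - proj z‖ ^ 2 ≤ Φ z - Φmin

/-- The Lyapunov function `Φ - min Φ + (L/2) dist²` of the convergence proof. -/
noncomputable def lyapunov (Φ : E → ℝ) (Φmin : ℝ) (proj : E → E) (L : ℝ) (z : E) : ℝ :=
  Φ z - Φmin + L / 2 * ‖z - proj z‖ ^ 2

variable {Φ : E → ℝ} {s : Set E} {Φmin L μ : ℝ} {proj : E → E}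

lemma lyapunov_le_one_add_mul_gap (hΦ : HasQuadraticGrowth Φ s Φmin proj μ) (hL : 0 ≤ L)
    (hμ : 0 < μ) {z : E} (hz : z ∈ s) :
    lyapunov Φ Φmin proj L z ≤ (1 + L / μ) * (Φ z - Φmin) := by
  have hgrowth := mul_le_mul_of_nonneg_left (hΦ.growth z hz) (div_nonneg hL hμ.le)
  have hcancel : L / μ * (μ / 2 * ‖z - proj z‖ ^ 2) = L / 2 * ‖z - proj z‖ ^ 2 := by
    field_simp
  rw [lyapunov]
  linarith

end QuadraticGrowth

section ExtendedRealObjective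

variable {X : Type*} {F : X → ℝ} {P R : X → EReal} {y z : X}

lemma objective_eq_coe (hP : ∀ z, P z = (F z : EReal) + R z) (hbot : ∀ z, R z ≠ ⊥)
    (hz : R z ≠ ⊤) : P z = (((F + fun z ↦ (R z).toReal) z : ℝ) : EReal) := by
  rw [hP, Pi.add_apply, EReal.coe_add, EReal.coe_toReal hz (hbot z)]

lemma ne_top_of_forall_objective_le (hP : ∀ z, P z = (F z : EReal) + R z)
    (hbot : ∀ z, R z ≠ ⊥) (htop : ∃ z, R z ≠ ⊤) (hy : ∀ w, P y ≤ P w) : R y ≠ ⊤ := by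
  obtain ⟨u, hu⟩ := htop
  intro hRy
  have hle := hy u
  rw [hP y, hRy, EReal.coe_add_top, objective_eq_coe hP hbot hu, top_le_iff] at hle
  exact EReal.coe_ne_top _ hle

lemma HasQuadraticGrowth.of_extendedReal {E : Type*} [SeminormedAddCommGroup E]
    {F : E → ℝ} {P R : E → EReal} {xstar : E} {proj : E → E} {μ : ℝ}
    (hP : ∀ z, P z = (F z : EReal) + R z) (hbot : ∀ z, R z ≠ ⊥) (htop : ∃ z, R z ≠ ⊤)
    (hxstar : ∀ y, P xstar ≤ P y) (hproj_opt : ∀ z y, P (proj z) ≤ P y)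
    (hproj_near : ∀ z y, (∀ w, P y ≤ P w) → ‖z - proj z‖ ≤ ‖z - y‖)
    (hgrowth : ∀ z, R z ≠ ⊤ → ((μ / 2 * ‖z - proj z‖ ^ 2 : ℝ) : EReal) ≤ P z - P xstar) :
    HasQuadraticGrowth (F + fun z ↦ (R z).toReal) {z | R z ≠ ⊤}
      ((F + fun z ↦ (R z).toReal) xstar) proj μ := by
  have hxstar_top := ne_top_of_forall_objective_le hP hbot htop hxstar
  have hproj_top (z : E) := ne_top_of_forall_objective_le hP hbot htop (hproj_opt z)
  refine ⟨hproj_top, fun z ↦ ?_, fun z w ↦ hproj_near z _ (hproj_opt w), fun z hz ↦ ?_⟩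
  · have heq := le_antisymm (hproj_opt z xstar) (hxstar (proj z))
    rw [objective_eq_coe hP hbot (hproj_top z), objective_eq_coe hP hbot hxstar_top] at heq
    exact EReal.coe_injective heq
  · have hle := hgrowth z hz
    rw [objective_eq_coe hP hbot hz, objective_eq_coe hP hbot hxstar_top,
      ← EReal.coe_sub] at hle
    exact EReal.coe_le_coe_iff.1 hle

end ExtendedRealObjective

section ExtendedConvex

variable {E : Type*} [AddCommGroup E] [Module ℝ E] {R : E → EReal}

/-- Convexity of an extended-real function: Jensen's inequality at two points, where
`0 * ⊤ = 0` in `EReal` makes the endpoints harmless. -/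
def ExtendedConvex (R : E → EReal) : Prop :=
  ∀ z w : E, ∀ θ : ℝ, 0 ≤ θ → θ ≤ 1 →
    R (θ • z + (1 - θ) • w) ≤ (θ : EReal) * R z + ((1 - θ : ℝ) : EReal) * R w

lemma ExtendedConvex.convexOn_toReal (hR : ExtendedConvex R) (hbot : ∀ z, R z ≠ ⊥) :
    ConvexOn ℝ {z | R z ≠ ⊤} fun z ↦ (R z).toReal := by
  have hle {z w : E} (hz : R z ≠ ⊤) (hw : R w ≠ ⊤) {a b : ℝ} (ha : 0 ≤ a) (hb : 0 ≤ b)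
      (hab : a + b = 1) :
      R (a • z + b • w) ≤ ((a * (R z).toReal + b * (R w).toReal : ℝ) : EReal) := by
    obtain rfl : b = 1 - a := by linarith
    simpa [EReal.coe_toReal hz (hbot z), EReal.coe_toReal hw (hbot w)] using
      hR z w a ha (by linarith)
  refine ⟨fun z hz w hw a b ha hb hab ↦ ne_top_of_le_ne_top (EReal.coe_ne_top _)
    (hle hz hw ha hb hab), fun z hz w hw a b ha hb hab ↦ ?_⟩
  exact EReal.toReal_le_toReal (hle hz hw ha hb hab) (hbot _) (EReal.coe_ne_top _)

end ExtendedConvex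

section ProximalPoint

variable {E : Type*} [SeminormedAddCommGroup E] {R : E → EReal} {γ : ℝ} {y z : E}

/-- The objective `½‖u - z‖² + γ r(u)` minimized by the proximal operator of `γ r` at `z`. -/
noncomputable def proxObjective (γ : ℝ) (r : E → ℝ) (z u : E) : ℝ :=
  1 / 2 * ‖u - z‖ ^ 2 + γ * r u

/-- `y` is a proximal point of `γ R` at `z`, that is, a minimizer of `½‖u - z‖² + γ R(u)`. -/
def IsProxPoint (γ : ℝ) (R : E → EReal) (z y : E) : Prop :=
  ∀ u : E, (((1 / 2) * ‖y - z‖ ^ 2 : ℝ) : EReal) + (γ : EReal) * R y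
    ≤ (((1 / 2) * ‖u - z‖ ^ 2 : ℝ) : EReal) + (γ : EReal) * R u

lemma IsProxPoint.ne_top (hy : IsProxPoint γ R z y) (hγ : 0 < γ) (hbot : ∀ z, R z ≠ ⊥)
    (htop : ∃ z, R z ≠ ⊤) : R y ≠ ⊤ := by
  obtain ⟨u, hu⟩ := htop
  intro hRy
  have hle := hy u
  rw [hRy, EReal.coe_mul_top_of_pos hγ, EReal.coe_add_top, ← EReal.coe_toReal hu (hbot u),
    ← EReal.coe_mul, ← EReal.coe_add, top_le_iff] at hle
  exact EReal.coe_ne_top _ hle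

lemma IsProxPoint.isMinOn_proxObjective (hy : IsProxPoint γ R z y) (hRy : R y ≠ ⊤)
    (hbot : ∀ z, R z ≠ ⊥) :
    IsMinOn (proxObjective γ (fun z ↦ (R z).toReal) z) {z | R z ≠ ⊤} y := by
  refine isMinOn_iff.2 fun u hu ↦ ?_
  have hle := hy u
  rw [← EReal.coe_toReal hu (hbot u), ← EReal.coe_toReal hRy (hbot y)] at hle
  exact_mod_cast hle

/-- `x` is a sequence of proximal gradient steps with directions `g` and step-size `γ` for the
regularizer equal to the convex function `r` on its effective domain `s` and to `+∞` elsewhere. -/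
structure IsProxGradientSequence [Module ℝ E] (s : Set E) (r : E → ℝ) (γ : ℝ)
    (x g : ℕ → E) : Prop where
  convexOn : ConvexOn ℝ s r
  mem : ∀ k, x k ∈ s
  isMinOn : ∀ k, IsMinOn (proxObjective γ r (x k - γ • g k)) s (x (k + 1))

lemma IsProxGradientSequence.of_isProxPoint [Module ℝ E] {x g : ℕ → E} (hR : ExtendedConvex R)
    (hbot : ∀ z, R z ≠ ⊥) (hγ : 0 < γ) (hx0 : R (x 0) ≠ ⊤)
    (hprox : ∀ k, IsProxPoint γ R (x k - γ • g k) (x (k + 1))) :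
    IsProxGradientSequence {z | R z ≠ ⊤} (fun z ↦ (R z).toReal) γ x g where
  convexOn := hR.convexOn_toReal hbot
  mem
    | 0 => hx0
    | k + 1 => (hprox k).ne_top hγ hbot ⟨x 0, hx0⟩
  isMinOn k := (hprox k).isMinOn_proxObjective ((hprox k).ne_top hγ hbot ⟨x 0, hx0⟩) hbot

end ProximalPoint

section ProximalGradient

variable {E : Type*} [NormedAddCommGroup E] [InnerProductSpace ℝ E]

/-- The vectors `g k` serve as gradients of the `L`-smooth convex function `F` along `x` up to
errors controlled by the steps of `x` since time `k - τ`, which is the only information on the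
delays that the convergence proof needs. -/
structure IsDelayedGradient (F : E → ℝ) (L : ℝ) (τ : ℕ) (x g : ℕ → E) : Prop where
  le_add_inner : ∀ k u, F (x (k + 1)) ≤ F u + ⟪g k, x (k + 1) - u⟫
    + L / 2 * ((τ + 1) * ∑ j ∈ Ico (k - τ) (k + 1), sqStep x j)
  le_add_inner_step : ∀ k, F (x (k + 1)) ≤ F (x k) + ⟪g k, x (k + 1) - x k⟫
    + L / 2 * ((τ + 1) * sqStep x k + ∑ j ∈ Ico (k - τ) k, sqStep x j)

section Aggregation

variable {ι : Type*} [Fintype ι] {c : ℝ}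

lemma mul_sum_le_of_forall_le_add_inner (hc : 0 ≤ c) {a b l : ι → ℝ} {G : ι → E} {v : E} {C : ℝ}
    (h : ∀ i, a i ≤ b i + ⟪G i, v⟫ + l i / 2 * C) :
    c * ∑ i, a i ≤ c * ∑ i, b i + ⟪c • ∑ i, G i, v⟫ + c * (∑ i, l i) / 2 * C := calc
  c * ∑ i, a i ≤ c * ∑ i, (b i + ⟪G i, v⟫ + l i / 2 * C) := by gcongr with i; exact h i
  _ = c * ∑ i, b i + ⟪c • ∑ i, G i, v⟫ + c * (∑ i, l i) / 2 * C := by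
    rw [Finset.sum_add_distrib, Finset.sum_add_distrib, real_inner_smul_left, sum_inner,
      ← Finset.sum_mul, ← Finset.sum_div]
    ring

lemma IsDelayedGradient.of_sum [CompleteSpace E] {f : ι → E → ℝ} {l : ι → ℝ≥0} {τ : ℕ}
    {s : ι → ℕ → ℕ} {x : ℕ → E} (hc : 0 ≤ c) (hconv : ∀ i, ConvexOn ℝ Set.univ (f i))
    (hdiff : ∀ i, Differentiable ℝ (f i)) (hl : ∀ i, LipschitzWith (l i) (∇ (f i)))
    (hs_ge : ∀ i k, k - τ ≤ s i k) (hs_le : ∀ i k, s i k ≤ k) :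
    IsDelayedGradient (fun z ↦ c * ∑ i, f i z) (c * ∑ i, (l i : ℝ)) τ x
      (fun k ↦ c • ∑ i, ∇ (f i) (x (s i k))) where
  le_add_inner k u := by
    refine mul_sum_le_of_forall_le_add_inner hc fun i ↦ ?_
    refine (le_add_inner_gradient_of_convexOn (hdiff i) (hconv i) (hl i) (x (s i k)) u _).trans ?_
    gcongr
    simpa using sq_norm_sub_le_mul_sum_sqStep (x := x) (k := k + 1) (τ := τ + 1)
      (m := s i k) (by have := hs_ge i k; omega) (by have := hs_le i k; omega)
  le_add_inner_step k := by
    refine mul_sum_le_of_forall_le_add_inner hc fun i ↦ ?_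
    have hsmooth := le_add_inner_gradient_add_norm_mul_norm (hdiff i) (hl i) (x (s i k)) (x k)
      (x (k + 1))
    have hdelay := mul_le_mul_of_nonneg_left
      (norm_sub_mul_le_half_add_sum_sqStep (x := x) (hs_ge i k) (hs_le i k) ‖x (k + 1) - x k‖)
      (l i).coe_nonneg
    rw [sqStep]
    linarith

end Aggregation

section ProximalStep

variable {s : Set E} {r : E → ℝ} {γ : ℝ} {a g u y z : E}

lemma mul_sub_le_inner_of_isMinOn_proxObjective (hr : ConvexOn ℝ s r) (hγ : 0 ≤ γ) (hy : y ∈ s)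
    (hmin : IsMinOn (proxObjective γ r z) s y) (hu : u ∈ s) :
    γ * (r y - r u) ≤ ⟪y - z, u - y⟫ := by
  have hsegment {t : ℝ} (ht : t ∈ Set.Ioc 0 1) :
      γ * (r y - r u) ≤ ⟪y - z, u - y⟫ + t * (1 / 2 * ‖u - y‖ ^ 2) := by
    have ht' : 0 ≤ 1 - t := sub_nonneg.2 ht.2
    have hmin_t := isMinOn_iff.1 hmin _ (hr.1 hu hy ht.1.le ht' (add_sub_cancel t 1))
    have hr_t := mul_le_mul_of_nonneg_left
      (hr.2 hu hy ht.1.le ht' (add_sub_cancel t 1)) hγ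
    have hexpand : t • u + (1 - t) • y - z = (y - z) + t • (u - y) := by module
    simp only [proxObjective, hexpand, norm_add_sq_real, real_inner_smul_right, norm_smul,
      mul_pow, Real.norm_eq_abs, sq_abs] at hmin_t
    simp only [smul_eq_mul] at hr_t
    refine le_of_mul_le_mul_left ?_ ht.1
    linarith
  have hlim : Tendsto (fun t : ℝ ↦ ⟪y - z, u - y⟫ + t * (1 / 2 * ‖u - y‖ ^ 2)) (𝓝[>] 0)
      (𝓝 ⟪y - z, u - y⟫) :=
    (Continuous.tendsto' (by fun_prop) 0 _ (by simp)).mono_left nhdsWithin_le_nhds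
  exact ge_of_tendsto hlim (by filter_upwards [Ioc_mem_nhdsGT one_pos] with t using hsegment)

lemma objective_sub_add_sq_le_of_prox_step {F : E → ℝ} {e : ℝ} (hr : ConvexOn ℝ s r)
    (hγ : 0 ≤ γ) (hy : y ∈ s) (hmin : IsMinOn (proxObjective γ r (a - γ • g)) s y) (hu : u ∈ s)
    (hF : F y ≤ F u + ⟪g, y - u⟫ + e) :
    γ * ((F + r) y - (F + r) u) + ‖y - u‖ ^ 2 / 2
      ≤ ‖a - u‖ ^ 2 / 2 - ‖y - a‖ ^ 2 / 2 + γ * e := by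
  have hprox := mul_sub_le_inner_of_isMinOn_proxObjective hr hγ hy hmin hu
  have three_point : ⟪y - (a - γ • g), u - y⟫
      = ‖a - u‖ ^ 2 / 2 - ‖y - u‖ ^ 2 / 2 - ‖y - a‖ ^ 2 / 2 - γ * ⟪g, y - u⟫ := by
    rw [show y - (a - γ • g) = (y - a) + γ • g by abel, show u - y = -(y - u) by abel,
      show a - u = (y - u) - (y - a) by abel, inner_neg_right, inner_add_left,
      real_inner_smul_left, norm_sub_sq_real, real_inner_comm (y - a)]
    ring
  have hFγ := mul_le_mul_of_nonneg_left hF hγ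
  simp only [Pi.add_apply]
  linarith

end ProximalStep

section Convergence

variable {F r : E → ℝ} {s : Set E} {L γ μ Φmin : ℝ} {τ : ℕ} {x g : ℕ → E} {proj : E → E}

lemma IsProxGradientSequence.gap_add_half_sq_dist_le
    (hx : IsProxGradientSequence s r γ x g) (hg : IsDelayedGradient F L τ x g)
    (hΦ : HasQuadraticGrowth (F + r) s Φmin proj μ) (hγ : 0 ≤ γ) (k : ℕ) :
    γ * ((F + r) (x (k + 1)) - Φmin) + ‖x (k + 1) - proj (x (k + 1))‖ ^ 2 / 2
      ≤ ‖x k - proj (x k)‖ ^ 2 / 2 - sqStep x k / 2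
        + γ * (L / 2 * ((τ + 1) * (sqStep x k + ∑ j ∈ Ico (k - τ) k, sqStep x j))) := by
  have hstep := objective_sub_add_sq_le_of_prox_step hx.convexOn hγ (hx.mem _) (hx.isMinOn k)
    (hΦ.proj_mem (x k)) (hg.le_add_inner k _)
  have hproj : ‖x (k + 1) - proj (x (k + 1))‖ ^ 2 ≤ ‖x (k + 1) - proj (x k)‖ ^ 2 := by
    gcongr
    exact hΦ.norm_sub_proj_le _ _
  rw [hΦ.apply_proj, Finset.sum_Ico_succ_top (by omega), add_comm (∑ _ ∈ _, _)] at hstep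
  simp only [sqStep] at hstep ⊢
  linarith

lemma IsProxGradientSequence.objective_succ_le
    (hx : IsProxGradientSequence s r γ x g) (hg : IsDelayedGradient F L τ x g)
    (hγ : 0 < γ) (k : ℕ) :
    (F + r) (x (k + 1)) ≤ (F + r) (x k) - sqStep x k / γ
      + L / 2 * ((τ + 1) * sqStep x k + ∑ j ∈ Ico (k - τ) k, sqStep x j) := by
  have hstep := objective_sub_add_sq_le_of_prox_step hx.convexOn hγ.le (hx.mem _) (hx.isMinOn k)
    (hx.mem k) (hg.le_add_inner_step k)
  rw [sub_self, norm_zero] at hstep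
  have hγw : γ * (sqStep x k / γ) = sqStep x k := mul_div_cancel₀ _ hγ.ne'
  refine le_of_mul_le_mul_left ?_ hγ
  simp only [sqStep] at hstep hγw ⊢
  linarith

lemma IsProxGradientSequence.lyapunov_succ_le
    (hx : IsProxGradientSequence s r γ x g) (hg : IsDelayedGradient F L τ x g)
    (hΦ : HasQuadraticGrowth (F + r) s Φmin proj μ) (hL : 0 < L) (hγ : 0 < γ)
    (hμ : 0 < μ) (k : ℕ) :
    (1 + L * γ / (1 + L / μ)) * lyapunov (F + r) Φmin proj L (x (k + 1))
      ≤ lyapunov (F + r) Φmin proj L (x k)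
        - L / 2 * (2 / (L * γ) - τ - L * γ * (τ + 1)) * sqStep x k
        + L / 2 * (1 + L * γ * (τ + 1)) * ∑ j ∈ Ico (k - τ) k, sqStep x j := by
  have hcontract : L * γ / (1 + L / μ) * lyapunov (F + r) Φmin proj L (x (k + 1))
      ≤ L * γ * ((F + r) (x (k + 1)) - Φmin) := by
    rw [div_mul_eq_mul_div, div_le_iff₀ (by positivity), mul_assoc (L * γ), mul_comm _ (1 + _)]
    gcongr
    exact lyapunov_le_one_add_mul_gap hΦ hL.le hμ (hx.mem _)
  have hdist := mul_le_mul_of_nonneg_left (hx.gap_add_half_sq_dist_le hg hΦ hγ.le k) hL.le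
  have hobjective := hx.objective_succ_le hg hγ k
  have hcoeff : L / 2 * (2 / (L * γ) - τ - L * γ * (τ + 1)) * sqStep x k
      = sqStep x k / γ - L / 2 * (τ + L * γ * (τ + 1)) * sqStep x k := by
    field_simp
    ring
  rw [hcoeff]
  simp only [lyapunov] at hcontract ⊢
  linarith

theorem IsProxGradientSequence.lyapunov_le_pow_mul
    (hx : IsProxGradientSequence s r γ x g) (hg : IsDelayedGradient F L τ x g)
    (hΦ : HasQuadraticGrowth (F + r) s Φmin proj μ) (hL : 0 < L) (hγ : 0 < γ)
    (hμ : 0 < μ) (hγτ : L * γ * (2 * τ + 1) ≤ 1) (k : ℕ) :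
    lyapunov (F + r) Φmin proj L (x k)
      ≤ (1 + L * γ / (1 + L / μ))⁻¹ ^ k * lyapunov (F + r) Φmin proj L (x 0) := by
  have hq1 : 1 ≤ 1 + L * γ / (1 + L / μ) := le_add_of_nonneg_right (by positivity)
  have hqγ : 1 + L * γ / (1 + L / μ) ≤ 1 + L * γ := by
    gcongr
    exact div_le_self (by positivity) (le_add_of_nonneg_right (by positivity))
  have hcoeff := mul_le_mul_of_nonneg_left
    (delay_coefficient_mul_pow_le (mul_pos hL hγ) hγτ (by positivity) hqγ)
    (half_pos hL).le
  have hpow := pow_mul_le_of_delayed_recursion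
    (V := fun k ↦ lyapunov (F + r) Φmin proj L (x k)) (sqStep_nonneg x) hq1
    (by positivity) (by linarith) (hx.lyapunov_succ_le hg hΦ hL hγ hμ) k
  rwa [inv_pow, inv_mul_eq_div, le_div_iff₀' (by positivity)]

theorem IsProxGradientSequence.linear_rate
    (hx : IsProxGradientSequence s r γ x g) (hg : IsDelayedGradient F L τ x g)
    (hΦ : HasQuadraticGrowth (F + r) s Φmin proj μ) (hL : 0 < L) (hγ : 0 < γ)
    (hμ : 0 < μ) (hγτ : L * γ * (2 * τ + 1) ≤ 1) (k : ℕ) :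
    ‖x k - proj (x k)‖ ^ 2 ≤ (1 + L * γ / (1 + L / μ))⁻¹ ^ k
        * (2 / L * ((F + r) (x 0) - Φmin) + ‖x 0 - proj (x 0)‖ ^ 2) ∧
      (F + r) (x k) - Φmin ≤ (1 + L * γ / (1 + L / μ))⁻¹ ^ k
        * ((F + r) (x 0) - Φmin + L / 2 * ‖x 0 - proj (x 0)‖ ^ 2) := by
  have hgap : 0 ≤ (F + r) (x k) - Φmin :=
    le_trans (by positivity) (hΦ.growth (x k) (hx.mem k))
  have hdist : 0 ≤ L / 2 * ‖x k - proj (x k)‖ ^ 2 := by positivity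
  have hV := hx.lyapunov_le_pow_mul hg hΦ hL hγ hμ hγτ k
  simp only [lyapunov] at hV
  refine ⟨le_of_mul_le_mul_left ?_ (half_pos hL), by linarith⟩
  calc L / 2 * ‖x k - proj (x k)‖ ^ 2
      ≤ (1 + L * γ / (1 + L / μ))⁻¹ ^ k
        * ((F + r) (x 0) - Φmin + L / 2 * ‖x 0 - proj (x 0)‖ ^ 2) := by linarith
    _ = L / 2 * ((1 + L * γ / (1 + L / μ))⁻¹ ^ k
        * (2 / L * ((F + r) (x 0) - Φmin) + ‖x 0 - proj (x 0)‖ ^ 2)) := by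
      field_simp

end Convergence

lemma contraction_factor_eq_inv_one_add {L μ h N : ℝ} (hL : 0 < L) (hμ : 0 < μ) (hh : 0 < h)
    (hN : 0 < N) :
    1 - 1 / (1 + (L / μ + 1) * N / h) = (1 + L * (h / (L * N)) / (1 + L / μ))⁻¹ := by
  field_simp
  ring

theorem piag_quadratic_growth_linear_rate_general [CompleteSpace E] {ι : Type*} [Fintype ι]
    {c : ℝ} (hc : 0 ≤ c) {f : ι → E → ℝ} {Li : ι → ℝ}
    (hconv : ∀ i, ConvexOn ℝ Set.univ (f i)) (hdiff : ∀ i, Differentiable ℝ (f i))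
    (hLi : ∀ i a b, ‖∇ (f i) b - ∇ (f i) a‖ ≤ Li i * ‖b - a‖)
    {R : E → EReal} (htop : ∃ z, R z ≠ ⊤) (hbot : ∀ z, R z ≠ ⊥) (hR : ExtendedConvex R)
    {F : E → ℝ} (hF : ∀ z, F z = c * ∑ i, f i z) {L : ℝ} (hLdef : L = c * ∑ i, Li i)
    {P : E → EReal} (hP : ∀ z, P z = (F z : EReal) + R z)
    {τ : ℕ} {s : ι → ℕ → ℕ} (hs_ge : ∀ i k, k - τ ≤ s i k) (hs_le : ∀ i k, s i k ≤ k)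
    {x g : ℕ → E} (hg : ∀ k, g k = c • ∑ i, ∇ (f i) (x (s i k)))
    {γ : ℝ} (hprox : ∀ k, IsProxPoint γ R (x k - γ • g k) (x (k + 1)))
    (hL : 0 < L) {xstar : E} (hxstar : ∀ y, P xstar ≤ P y)
    {proj : E → E} (hproj_opt : ∀ z y, P (proj z) ≤ P y)
    (hproj_near : ∀ z y, (∀ w, P y ≤ P w) → ‖z - proj z‖ ≤ ‖z - y‖)
    {μ : ℝ} (hμ : 0 < μ)
    (hgrowth : ∀ z, R z ≠ ⊤ → ((μ / 2 * ‖z - proj z‖ ^ 2 : ℝ) : EReal) ≤ P z - P xstar)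
    {Q : ℝ} (hQ : Q = L / μ) {h : ℝ} (hh0 : 0 < h) (hh1 : h ≤ 1)
    (hγdef : γ = h / (L * (2 * (τ : ℝ) + 1))) (k : ℕ) :
    ((‖x k - proj (x k)‖ ^ 2 : ℝ) : EReal)
        ≤ (((1 - 1 / (1 + (Q + 1) * (2 * (τ : ℝ) + 1) / h)) ^ k : ℝ) : EReal) *
            (((2 / L : ℝ) : EReal) * (P (x 0) - P xstar)
              + ((‖x 0 - proj (x 0)‖ ^ 2 : ℝ) : EReal)) ∧
      P (x k) - P xstar
        ≤ (((1 - 1 / (1 + (Q + 1) * (2 * (τ : ℝ) + 1) / h)) ^ k : ℝ) : EReal) *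
            ((P (x 0) - P xstar) + ((L / 2 * ‖x 0 - proj (x 0)‖ ^ 2 : ℝ) : EReal)) := by
  have hxstar_top := ne_top_of_forall_objective_le hP hbot htop hxstar
  have hγ : 0 < γ := by rw [hγdef]; positivity
  rw [hQ, contraction_factor_eq_inv_one_add hL hμ hh0 (by positivity), ← hγdef,
    objective_eq_coe hP hbot hxstar_top]
  by_cases hx0 : R (x 0) = ⊤
  · rw [hP (x 0), hx0, EReal.coe_add_top, EReal.top_sub_coe,
      EReal.coe_mul_top_of_pos (by positivity), EReal.top_add_coe, EReal.top_add_coe,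
      EReal.coe_mul_top_of_pos (by positivity)]
    exact ⟨le_top, le_top⟩
  obtain ⟨l, hl, hl_sum⟩ := exists_lipschitzWith_sum_eq hLi
    (pos_of_mul_pos_right (hLdef ▸ hL) hc).le
  have hgrad : IsDelayedGradient F L τ x g := by
    rw [funext hF, funext hg, hLdef, ← hl_sum]
    exact .of_sum hc hconv hdiff hl hs_ge hs_le
  have hseq : IsProxGradientSequence {z | R z ≠ ⊤} (fun z ↦ (R z).toReal) γ x g :=
    .of_isProxPoint hR hbot hγ hx0 hprox
  have hγτ : L * γ * (2 * τ + 1) ≤ 1 := by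
    rw [hγdef]
    field_simp
    exact hh1
  have hrate := hseq.linear_rate hgrad
    (.of_extendedReal hP hbot htop hxstar hproj_opt hproj_near hgrowth) hL hγ hμ hγτ k
  rw [objective_eq_coe hP hbot (hseq.mem k), objective_eq_coe hP hbot hx0]
  exact_mod_cast hrate

end ProximalGradient

/-- Theorem 2 (PIAG under quadratic functional growth): with `Q = L/μ` and
step-size `γ = h/(L(2τ+1))`, `h ∈ (0,1]`, for every `k ≥ 0`:
(i) `‖x_k − Π(x_k)‖² ≤ ρ^k ((2/L)(P(x_0) − P⋆) + ‖x_0 − Π(x_0)‖²)` and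
(ii) `P(x_k) − P⋆ ≤ ρ^k (P(x_0) − P⋆ + (L/2)‖x_0 − Π(x_0)‖²)`,
where `ρ = 1 − 1/(1 + (Q+1)(2τ+1)/h)`.  `Π = Π_{X⋆}` is encoded as a map `Pi`
whose values are optimal and minimize the distance to the optimal set; the
regularizer `R` is `EReal`-valued, so both bounds are stated in `EReal`. -/
theorem piag_quadratic_growth_linear_rate
    {d n : ℕ} (hn : 0 < n)
    (f : Fin n → EuclideanSpace ℝ (Fin d) → ℝ)
    (Li : Fin n → ℝ)
    (hconv : ∀ i, ConvexOn ℝ Set.univ (f i))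
    (hdiff : ∀ i, Differentiable ℝ (f i))
    (hLi : ∀ i, ∀ a b : EuclideanSpace ℝ (Fin d),
      ‖gradient (f i) b - gradient (f i) a‖ ≤ Li i * ‖b - a‖)
    (R : EuclideanSpace ℝ (Fin d) → EReal)
    (hRne_top : ∃ z, R z ≠ ⊤)
    (hRne_bot : ∀ z, R z ≠ ⊥)
    (hRconvex : ∀ z w : EuclideanSpace ℝ (Fin d), ∀ θ : ℝ, 0 ≤ θ → θ ≤ 1 →
      R (θ • z + (1 - θ) • w) ≤ (θ : EReal) * R z + ((1 - θ : ℝ) : EReal) * R w)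
    (hRclosed : LowerSemicontinuous R)
    (F : EuclideanSpace ℝ (Fin d) → ℝ)
    (hF : ∀ z, F z = (1 / (n : ℝ)) * ∑ i, f i z)
    (L : ℝ) (hLdef : L = (1 / (n : ℝ)) * ∑ i, Li i)
    (P : EuclideanSpace ℝ (Fin d) → EReal)
    (hP : ∀ z, P z = (F z : EReal) + R z)
    (γ : ℝ) (hγ : 0 < γ) (τ : ℕ)
    (s : Fin n → ℕ → ℕ)
    (hs1 : ∀ i k, k - τ ≤ s i k) (hs2 : ∀ i k, s i k ≤ k)
    (x : ℕ → EuclideanSpace ℝ (Fin d))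
    (g : ℕ → EuclideanSpace ℝ (Fin d))
    (hg : ∀ k, g k = (1 / (n : ℝ)) • ∑ i, gradient (f i) (x (s i k)))
    (hprox : ∀ k : ℕ, ∀ u : EuclideanSpace ℝ (Fin d),
      (((1 / 2) * ‖x (k + 1) - (x k - γ • g k)‖ ^ 2 : ℝ) : EReal)
          + (γ : EReal) * R (x (k + 1))
        ≤ (((1 / 2) * ‖u - (x k - γ • g k)‖ ^ 2 : ℝ) : EReal) + (γ : EReal) * R u)
    (hL : 0 < L)
    (xstar : EuclideanSpace ℝ (Fin d))
    (hxstar : ∀ y, P xstar ≤ P y)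
    (Pi : EuclideanSpace ℝ (Fin d) → EuclideanSpace ℝ (Fin d))
    (hPiopt : ∀ z, ∀ y, P (Pi z) ≤ P y)
    (hPinear : ∀ z y, (∀ w, P y ≤ P w) → ‖z - Pi z‖ ≤ ‖z - y‖)
    (μ : ℝ) (hμ : 0 < μ)
    (hgrowth : ∀ z, R z ≠ ⊤ →
      ((μ / 2 * ‖z - Pi z‖ ^ 2 : ℝ) : EReal) ≤ P z - P xstar)
    (Q : ℝ) (hQ : Q = L / μ)
    (h : ℝ) (hh0 : 0 < h) (hh1 : h ≤ 1)
    (hγdef : γ = h / (L * (2 * (τ : ℝ) + 1))) :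
    ∀ k : ℕ,
      ((‖x k - Pi (x k)‖ ^ 2 : ℝ) : EReal)
        ≤ (((1 - 1 / (1 + (Q + 1) * (2 * (τ : ℝ) + 1) / h)) ^ k : ℝ) : EReal) *
            (((2 / L : ℝ) : EReal) * (P (x 0) - P xstar)
              + ((‖x 0 - Pi (x 0)‖ ^ 2 : ℝ) : EReal)) ∧
      P (x k) - P xstar
        ≤ (((1 - 1 / (1 + (Q + 1) * (2 * (τ : ℝ) + 1) / h)) ^ k : ℝ) : EReal) *
            ((P (x 0) - P xstar)
              + ((L / 2 * ‖x 0 - Pi (x 0)‖ ^ 2 : ℝ) : EReal)) :=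
  piag_quadratic_growth_linear_rate_general (by positivity) hconv hdiff hLi hRne_top
    hRne_bot hRconvex hF hLdef hP hs1 hs2 hg hprox hL hxstar hPiopt hPinear hμ hgrowth hQ hh0 hh1
    hγdef
end

section
/- Consider the asynchronous fixed-point setting with T a pseudo-contraction with respect to the block-maximum norm with contraction modulus c ∈ (0,1). Assume total asynchronism: each set K_i is an infinite subset of ℕ₀, and lim_{k→∞} s_{ij,k} = +∞ for all i, j ∈ [m] (the limit taken along k ∈ K_i). Then the iterates {x_k} of the asynchronous iteration converge to the unique fixed point x⋆ of T, i.e., ‖x_k − x⋆‖ → 0 in the block-maximum norm. -/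
/-!
The weighted balls around `x⋆` in the block-maximum norm are products of blockwise balls, and `T`
maps the ball of radius `r` into the ball of radius `c * r`. Being products, these balls still
contain a vector whose blocks are read off iterates of different ages, provided each of those
iterates lies in the ball. Hence all iterates stay in the ball of radius `‖x₀ - x⋆‖`; and once all
late iterates lie in a ball, every block update using late enough information lands in the ball
shrunk by `c`, where the block stays. Each block is updated infinitely often, so by induction the
iterates eventually enter the ball of radius `c ^ n * ‖x₀ - x⋆‖` for every `n`.
-/

open Filter Set Topology

theorem eventually_atTop_of_infinite_of_eventually_succ {p : ℕ → Prop} {K : Set ℕ}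
    (hK : K.Infinite) (hmem : ∀ᶠ k in atTop ⊓ 𝓟 K, p (k + 1))
    (hnotMem : ∀ k ∉ K, p k → p (k + 1)) : ∀ᶠ k in atTop, p k := by
  obtain ⟨M, hM⟩ := eventually_atTop.1 (eventually_inf_principal.1 hmem)
  obtain ⟨k₀, hk₀, hMk₀⟩ := hK.exists_gt M
  refine eventually_atTop.2 ⟨k₀ + 1, fun k hk => ?_⟩
  induction k, hk using Nat.le_induction with
  | base => exact hM k₀ hMk₀.le hk₀
  | succ k hk ih =>
    by_cases hkK : k ∈ K
    · exact hM k (by omega) hkK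
    · exact hnotMem k hkK ih

theorem tendsto_zero_of_forall_eventually_le {α β : Type*} {l : Filter α} {l' : Filter β}
    [l'.NeBot] {u : α → ℝ} {b : β → ℝ} (hu : ∀ a, 0 ≤ u a) (hb : Tendsto b l' (𝓝 0))
    (hub : ∀ n, ∀ᶠ a in l, u a ≤ b n) : Tendsto u l (𝓝 0) := by
  refine tendsto_order.2 ⟨fun ε hε => .of_forall fun a => hε.trans_le (hu a), fun ε hε => ?_⟩
  obtain ⟨n, hn⟩ := (hb.eventually_lt_const hε).exists
  exact (hub n).mono fun a ha => ha.trans_lt hn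

section AsyncIteration

variable {ι : Type*} {α : ι → Type*}

/-- The sequence `x` is an asynchronous iteration of `T`: at each time `k ∈ K i`, block `i` is
updated by `T` from the blocks `j` of the iterates at the information times `s i j k ≤ k`, and at
all other times it is left unchanged. -/
structure IsAsyncIteration (T : (∀ i, α i) → ∀ i, α i) (K : ι → Set ℕ) (s : ι → ι → ℕ → ℕ)
    (x : ℕ → ∀ i, α i) : Prop where
  info_le : ∀ i j k, s i j k ≤ k
  update : ∀ k i, k ∈ K i → x (k + 1) i = T (fun j => x (s i j k) j) i
  skip : ∀ k i, k ∉ K i → x (k + 1) i = x k i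

/-- Total asynchronism of the update times `K` and information times `s`: every block is updated
infinitely often, and any given iterate is eventually no longer used. The information times
`s i j k` are only constrained along `k ∈ K i`. -/
structure IsTotallyAsync (K : ι → Set ℕ) (s : ι → ι → ℕ → ℕ) : Prop where
  infinite : ∀ i, (K i).Infinite
  tendsto_info : ∀ i j, Tendsto (s i j) (atTop ⊓ 𝓟 (K i)) atTop

namespace IsAsyncIteration

variable {T : (∀ i, α i) → ∀ i, α i} {K : ι → Set ℕ} {s : ι → ι → ℕ → ℕ} {x : ℕ → ∀ i, α i}

theorem mem_pi_of_mapsTo (hx : IsAsyncIteration T K s x) {S : ∀ i, Set (α i)}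
    (hT : MapsTo T (univ.pi S) (univ.pi S)) (h₀ : x 0 ∈ univ.pi S) (k : ℕ) :
    x k ∈ univ.pi S := by
  induction k using Nat.strong_induction_on with
  | _ k ih =>
    intro i _
    rcases k with _ | k
    · exact h₀ i trivial
    by_cases hk : k ∈ K i
    · have hinfo : (fun j => x (s i j k) j) ∈ univ.pi S := fun j _ =>
        ih _ (Nat.lt_succ_of_le (hx.info_le i j k)) j trivial
      exact hx.update k i hk ▸ hT hinfo i trivial
    · exact hx.skip k i hk ▸ ih k k.lt_succ_self i trivial

theorem eventually_mem_pi_of_mapsTo [Finite ι] (hx : IsAsyncIteration T K s x)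
    (hKs : IsTotallyAsync K s) {S S' : ∀ i, Set (α i)}
    (hT : MapsTo T (univ.pi S) (univ.pi S')) (hS : ∀ᶠ k in atTop, x k ∈ univ.pi S) :
    ∀ᶠ k in atTop, x k ∈ univ.pi S' := by
  simp only [mem_univ_pi, eventually_all]
  intro i
  have hinfo : ∀ᶠ k in atTop ⊓ 𝓟 (K i), (fun j => x (s i j k) j) ∈ univ.pi S := by
    simp only [mem_univ_pi, eventually_all]
    exact fun j => (hKs.tendsto_info i j).eventually (hS.mono fun k hk => hk j trivial)
  have hupdate : ∀ᶠ k in atTop ⊓ 𝓟 (K i), x (k + 1) i ∈ S' i := by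
    filter_upwards [hinfo, mem_inf_of_right (mem_principal_self (K i))] with k hk hkK
    exact hx.update k i hkK ▸ hT hk i trivial
  exact eventually_atTop_of_infinite_of_eventually_succ (hKs.infinite i) hupdate
    fun k hk hmem => (hx.skip k i hk).symm ▸ hmem

theorem eventually_mem_pi_of_mapsTo_succ [Finite ι] (hx : IsAsyncIteration T K s x)
    (hKs : IsTotallyAsync K s) {S : ℕ → ∀ i, Set (α i)} (h₀ : x 0 ∈ univ.pi (S 0))
    (hS : univ.pi (S 1) ⊆ univ.pi (S 0))
    (hT : ∀ n, MapsTo T (univ.pi (S n)) (univ.pi (S (n + 1)))) (n : ℕ) :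
    ∀ᶠ k in atTop, x k ∈ univ.pi (S n) := by
  induction n with
  | zero => exact .of_forall (hx.mem_pi_of_mapsTo ((hT 0).mono_right hS) h₀)
  | succ n ih => exact hx.eventually_mem_pi_of_mapsTo hKs (hT n) ih

end IsAsyncIteration

end AsyncIteration

section BlockMaxNorm

variable {ι : Type*} [Fintype ι] [Nonempty ι] {E : ι → Type*} [∀ i, SeminormedAddCommGroup (E i)]

/-- The block-maximum norm `max_i w i * ‖z i‖` with weights `w`, in which all convergence
statements are measured. -/
noncomputable def blockMaxNorm (w : ι → ℝ) (z : ∀ i, E i) : ℝ :=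
  Finset.univ.sup' Finset.univ_nonempty fun i => w i * ‖z i‖

theorem blockMaxNorm_nonneg {w : ι → ℝ} (hw : ∀ i, 0 ≤ w i) (z : ∀ i, E i) :
    0 ≤ blockMaxNorm w z :=
  let ⟨i⟩ := ‹Nonempty ι›
  (mul_nonneg (hw i) (norm_nonneg (z i))).trans
    (Finset.le_sup' (fun i => w i * ‖z i‖) (Finset.mem_univ i))

theorem mem_pi_iff_blockMaxNorm_sub_le {w : ι → ℝ} {a z : ∀ i, E i} {r : ℝ} :
    z ∈ univ.pi (fun i => {y | w i * ‖y - a i‖ ≤ r}) ↔ blockMaxNorm w (z - a) ≤ r := by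
  simp [blockMaxNorm]

theorem IsAsyncIteration.eventually_blockMaxNorm_sub_le {w : ι → ℝ} (hw : ∀ i, 0 ≤ w i)
    {T : (∀ i, E i) → ∀ i, E i} {c : ℝ} (hc0 : 0 ≤ c) (hc1 : c ≤ 1) {xstar : ∀ i, E i}
    (hcontr : ∀ z, blockMaxNorm w (T z - xstar) ≤ c * blockMaxNorm w (z - xstar))
    {K : ι → Set ℕ} {s : ι → ι → ℕ → ℕ} {x : ℕ → ∀ i, E i}
    (hx : IsAsyncIteration T K s x) (hKs : IsTotallyAsync K s) (n : ℕ) :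
    ∀ᶠ k in atTop, blockMaxNorm w (x k - xstar) ≤ c ^ n * blockMaxNorm w (x 0 - xstar) := by
  set r := blockMaxNorm w (x 0 - xstar)
  have hr : 0 ≤ r := blockMaxNorm_nonneg hw _
  let ball (n : ℕ) (i : ι) : Set (E i) := {y | w i * ‖y - xstar i‖ ≤ c ^ n * r}
  have mem_ball {n : ℕ} {z : ∀ i, E i} :
      z ∈ univ.pi (ball n) ↔ blockMaxNorm w (z - xstar) ≤ c ^ n * r :=
    mem_pi_iff_blockMaxNorm_sub_le
  have start_mem : x 0 ∈ univ.pi (ball 0) := mem_ball.2 (by simp [r])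
  have ball_one_subset : univ.pi (ball 1) ⊆ univ.pi (ball 0) := fun z hz =>
    mem_ball.2 ((mem_ball.1 hz).trans
      (mul_le_mul_of_nonneg_right (pow_le_pow_of_le_one hc0 hc1 zero_le_one) hr))
  have mapsTo_ball (n : ℕ) : MapsTo T (univ.pi (ball n)) (univ.pi (ball (n + 1))) := fun z hz =>
    mem_ball.2 <| calc
      blockMaxNorm w (T z - xstar) ≤ c * blockMaxNorm w (z - xstar) := hcontr z
      _ ≤ c * (c ^ n * r) := mul_le_mul_of_nonneg_left (mem_ball.1 hz) hc0
      _ = c ^ (n + 1) * r := by ring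
  exact (hx.eventually_mem_pi_of_mapsTo_succ hKs start_mem ball_one_subset mapsTo_ball n).mono
    fun k => mem_ball.1

theorem async_pseudocontraction_total_asynchronism_general {w : ι → ℝ} (hw : ∀ i, 0 ≤ w i)
    {T : (∀ i, E i) → ∀ i, E i} {c : ℝ} (hc0 : 0 ≤ c) (hc1 : c < 1) {xstar : ∀ i, E i}
    (hcontr : ∀ z, blockMaxNorm w (T z - xstar) ≤ c * blockMaxNorm w (z - xstar))
    {K : ι → Set ℕ} {s : ι → ι → ℕ → ℕ} {x : ℕ → ∀ i, E i}
    (hx : IsAsyncIteration T K s x) (hKs : IsTotallyAsync K s) :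
    Tendsto (fun k => blockMaxNorm w (x k - xstar)) atTop (𝓝 0) := by
  have radius_tendsto :
      Tendsto (fun n : ℕ => c ^ n * blockMaxNorm w (x 0 - xstar)) atTop (𝓝 0) := by
    simpa using (tendsto_pow_atTop_nhds_zero_of_lt_one hc0 hc1).mul_const _
  exact tendsto_zero_of_forall_eventually_le (fun k => blockMaxNorm_nonneg hw _) radius_tendsto
    (hx.eventually_blockMaxNorm_sub_le hw hc0 hc1.le hcontr hKs)

end BlockMaxNorm

/-- Theorem 5 (total asynchronism): if each update-time set `K_i` is infinite
and the information times satisfy `s_{ij,k} → ∞` along `k ∈ K_i`, then the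
asynchronous iterates of a block-maximum-norm pseudo-contraction converge to
its (unique) fixed point `x⋆`, i.e. `‖x_k − x⋆‖ → 0` in the block-maximum
norm.  Each block is a finite-dimensional real normed space. -/
theorem async_pseudocontraction_total_asynchronism
    {m : ℕ} (hm : 0 < m)
    (Bl : Fin m → Type*) [∀ i, NormedAddCommGroup (Bl i)]
    [∀ i, NormedSpace ℝ (Bl i)] [∀ i, FiniteDimensional ℝ (Bl i)]
    (w : Fin m → ℝ) (hw : ∀ i, 0 < w i)
    (bmNorm : (∀ i, Bl i) → ℝ)
    (hbm : ∀ z : ∀ i, Bl i, bmNorm z =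
      (Finset.univ : Finset (Fin m)).sup'
        (Finset.univ_nonempty_iff.mpr ⟨⟨0, hm⟩⟩) (fun i => w i * ‖z i‖))
    (T : (∀ i, Bl i) → (∀ i, Bl i))
    (c : ℝ) (hc0 : 0 < c) (hc1 : c < 1)
    (xstar : ∀ i, Bl i) (hfix : T xstar = xstar)
    (hcontr : ∀ z, bmNorm (T z - xstar) ≤ c * bmNorm (z - xstar))
    (K : Fin m → Set ℕ) (hK0 : ∀ i, 0 ∈ K i)
    (s : Fin m → Fin m → ℕ → ℕ)
    (hs_le : ∀ i j k, s i j k ≤ k)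
    (x : ℕ → ∀ i, Bl i)
    (hupd : ∀ k : ℕ, ∀ i, k ∈ K i → x (k + 1) i = T (fun j => x (s i j k) j) i)
    (hskip : ∀ k : ℕ, ∀ i, k ∉ K i → x (k + 1) i = x k i)
    (hKinf : ∀ i, (K i).Infinite)
    (hslim : ∀ i j, Filter.Tendsto (fun k => s i j k)
      (Filter.atTop ⊓ Filter.principal (K i)) Filter.atTop) :
    Filter.Tendsto (fun k => bmNorm (x k - xstar)) Filter.atTop (nhds 0) := by
  have : Nonempty (Fin m) := ⟨⟨0, hm⟩⟩
  obtain rfl : bmNorm = blockMaxNorm w := funext hbm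
  exact async_pseudocontraction_total_asynchronism_general (fun i => (hw i).le) hc0.le hc1 hcontr
    ⟨hs_le, hupd, hskip⟩ ⟨hKinf, hslim⟩
end
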